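/- arXiv:2210.05142 — 3 statements merged into one kernel-verified Lean document; each statement's English description precedes it below -/
import Mathlib

section
/- Let f_s : ℤ × ℝⁿ → ℝⁿ be continuously differentiable in its second argument, H ∈ ℝ^{n×n} symmetric positive definite, and γ ∈ (0,1) such that (∂f_s/∂s)(t,s)ᵀ H² (∂f_s/∂s)(t,s) ⪯ γ H² for all s, t. Let s : ℤ → ℝⁿ satisfy s[t+1] = f_s(t, s[t]) for all t ≥ t⁰, and let B ∈ ℝ satisfy ‖H f_s(τ, 0)‖ ≤ B for all τ ≥ t⁰. Then for all t ≥ t⁰: ‖H s[t]‖ ≤ γ^{(t−t⁰)/2} ‖H s[t⁰]‖ + B/(1 − √γ). -/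
open scoped Matrix

/-!
In the weighted seminorm `v ↦ ‖H v‖` the condition `Jᵀ H² J ⪯ γ H²` says that
`‖H J v‖ ≤ √γ ‖H v‖`. By the mean value inequality along the segment from `0` to `y`, each map
`fₛ(t, ·)` satisfies `‖H fₛ(t, y) - H fₛ(t, 0)‖ ≤ √γ ‖H y‖`, hence
`‖H s[t+1]‖ ≤ √γ ‖H s[t]‖ + B`. Since `B / (1 - √γ)` is the fixed point of `x ↦ √γ x + B`, the
excess over it shrinks by the factor `√γ` at each step.
-/

section Recursion

variable {K : Type*} [Field K] [LinearOrder K] [IsStrictOrderedRing K] {q b : K} {u : ℕ → K}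

theorem le_pow_mul_add_div_one_sub_of_le_mul_add (hq : 0 ≤ q) (hq' : q < 1) (hb : 0 ≤ b)
    (hu : ∀ k, u (k + 1) ≤ q * u k + b) (k : ℕ) : u k ≤ q ^ k * u 0 + b / (1 - q) := by
  have hq_pos : 0 < 1 - q := sub_pos.2 hq'
  have fixed : q * (b / (1 - q)) + b = b / (1 - q) := by
    field_simp
    ring
  induction k with
  | zero => simpa using div_nonneg hb hq_pos.le
  | succ k ih =>
    calc u (k + 1) ≤ q * u k + b := hu k
      _ ≤ q * (q ^ k * u 0 + b / (1 - q)) + b := by gcongr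
      _ = q ^ (k + 1) * u 0 + (q * (b / (1 - q)) + b) := by ring
      _ = q ^ (k + 1) * u 0 + b / (1 - q) := by rw [fixed]

end Recursion

section MatrixNorm

open scoped ComplexOrder

variable {𝕜 l m n : Type*} [RCLike 𝕜] [Fintype l] [Fintype m] [Fintype n]

theorem ofReal_norm_sq_toLp_mulVec (A : Matrix m n 𝕜) (x : n → 𝕜) :
    ((‖WithLp.toLp 2 (A *ᵥ x)‖ ^ 2 : ℝ) : 𝕜) = star x ⬝ᵥ ((Aᴴ * A) *ᵥ x) := by
  rw [RCLike.ofReal_pow, ← inner_self_eq_norm_sq_to_K (𝕜 := 𝕜), EuclideanSpace.inner_toLp_toLp,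
    dotProduct_comm, Matrix.star_mulVec, ← Matrix.dotProduct_mulVec, Matrix.mulVec_mulVec]

theorem norm_toLp_mulVec_le_of_posSemidef_sub {A : Matrix l n 𝕜} {B : Matrix m n 𝕜}
    (h : (Bᴴ * B - Aᴴ * A).PosSemidef) (x : n → 𝕜) :
    ‖WithLp.toLp 2 (A *ᵥ x)‖ ≤ ‖WithLp.toLp 2 (B *ᵥ x)‖ := by
  have hx := h.dotProduct_mulVec_nonneg x
  rw [Matrix.sub_mulVec, dotProduct_sub, ← ofReal_norm_sq_toLp_mulVec,
    ← ofReal_norm_sq_toLp_mulVec, sub_nonneg, RCLike.ofReal_le_ofReal] at hx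
  exact le_of_sq_le_sq hx (norm_nonneg _)

theorem norm_toLp_mulVec_mulVec_le_sqrt_mul {H : Matrix m n 𝕜} {J : Matrix n n 𝕜} {γ : ℝ}
    (hγ : 0 ≤ γ) (h : (γ • (Hᴴ * H) - Jᴴ * (Hᴴ * H) * J).PosSemidef) (x : n → 𝕜) :
    ‖WithLp.toLp 2 (H *ᵥ (J *ᵥ x))‖ ≤ √γ * ‖WithLp.toLp 2 (H *ᵥ x)‖ := by
  have hHJ : ((√γ • H)ᴴ * (√γ • H) - (H * J)ᴴ * (H * J)).PosSemidef := by
    simpa [smul_smul, Real.mul_self_sqrt hγ, Matrix.mul_assoc] using h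
  simpa [Matrix.smul_mulVec, norm_smul, abs_of_nonneg] using
    norm_toLp_mulVec_le_of_posSemidef_sub hHJ x

end MatrixNorm

section WeightedContraction

variable {E F : Type*} [NormedAddCommGroup E] [NormedSpace ℝ E]
  [NormedAddCommGroup F] [NormedSpace ℝ F]

theorem norm_image_sub_le_of_norm_fderiv_apply_sub_le {g : E → F} {g' : E → E →L[ℝ] F} {x y : E}
    {C : ℝ} (hg : ∀ z ∈ segment ℝ x y, HasFDerivAt g (g' z) z)
    (bound : ∀ z ∈ segment ℝ x y, ‖g' z (y - x)‖ ≤ C) : ‖g y - g x‖ ≤ C := by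
  have mem_segment {r : ℝ} (hr : r ∈ Set.Icc 0 1) : AffineMap.lineMap x y r ∈ segment ℝ x y :=
    segment_eq_image_lineMap ℝ x y ▸ Set.mem_image_of_mem _ hr
  simpa using norm_image_sub_le_of_norm_deriv_le_segment_01'
    (fun r hr ↦ (hg _ (mem_segment hr)).comp_hasDerivWithinAt r AffineMap.hasDerivWithinAt_lineMap)
    (fun r hr ↦ bound _ (mem_segment (Set.Ico_subset_Icc_self hr)))

theorem norm_map_sub_map_le_of_norm_map_fderiv_le {H : E →L[ℝ] F} {f : E → E}
    {f' : E → E →L[ℝ] E} {q : ℝ} (hf : ∀ y, HasFDerivAt f (f' y) y)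
    (hcontr : ∀ y v, ‖H (f' y v)‖ ≤ q * ‖H v‖) (x y : E) :
    ‖H (f y) - H (f x)‖ ≤ q * ‖H (y - x)‖ :=
  norm_image_sub_le_of_norm_fderiv_apply_sub_le (g := H ∘ f)
    (fun z _ ↦ H.hasFDerivAt.comp z (hf z)) (fun z _ ↦ hcontr z (y - x))

theorem stmt6_general (H : E →L[ℝ] F) {q : ℝ} (hq : q ∈ Set.Ico (0 : ℝ) 1) {t₀ : ℤ}
    {f : ℤ → E → E} {f' : ℤ → E → E →L[ℝ] E}
    (hf : ∀ t, t₀ ≤ t → ∀ y, HasFDerivAt (f t) (f' t y) y)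
    (hcontr : ∀ t, t₀ ≤ t → ∀ y v, ‖H (f' t y v)‖ ≤ q * ‖H v‖)
    {s : ℤ → E} (hs : ∀ t, t₀ ≤ t → s (t + 1) = f t (s t))
    {B : ℝ} (hB : ∀ t, t₀ ≤ t → ‖H (f t 0)‖ ≤ B) {t : ℤ} (ht : t₀ ≤ t) :
    ‖H (s t)‖ ≤ q ^ (t - t₀).toNat * ‖H (s t₀)‖ + B / (1 - q) := by
  have step (τ : ℤ) (hτ : t₀ ≤ τ) : ‖H (s (τ + 1))‖ ≤ q * ‖H (s τ)‖ + B := by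
    have contraction : ‖H (f τ (s τ)) - H (f τ 0)‖ ≤ q * ‖H (s τ)‖ := by
      simpa only [sub_zero] using
        norm_map_sub_map_le_of_norm_map_fderiv_le (hf τ hτ) (hcontr τ hτ) 0 (s τ)
    calc ‖H (s (τ + 1))‖ = ‖H (f τ (s τ))‖ := by rw [hs τ hτ]
      _ ≤ ‖H (f τ (s τ)) - H (f τ 0)‖ + ‖H (f τ 0)‖ := norm_le_norm_sub_add _ _
      _ ≤ q * ‖H (s τ)‖ + B := add_le_add contraction (hB τ hτ)
  have hB_nonneg : 0 ≤ B := (norm_nonneg _).trans (hB t₀ le_rfl)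
  obtain ⟨k, rfl⟩ := Int.le.dest ht
  simpa using le_pow_mul_add_div_one_sub_of_le_mul_add (u := fun k : ℕ ↦ ‖H (s (t₀ + k))‖)
    hq.1 hq.2 hB_nonneg (fun k ↦ by simpa [add_assoc] using step (t₀ + k) (by simp)) k

end WeightedContraction

/-- **Lemma 5, first part (bound on solutions of the blended dynamics).**
If the Jacobian of `fₛ(t,·)` satisfies `Jᵀ H² J ⪯ γ H²` everywhere, `s` solves
`s[t+1] = fₛ(t, s[t])` for `t ≥ t⁰`, and `‖H fₛ(τ, 0)‖ ≤ B` for all `τ ≥ t⁰`, then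
`‖H s[t]‖ ≤ (√γ)^{t−t⁰} ‖H s[t⁰]‖ + B/(1−√γ)` for all `t ≥ t⁰`. -/
theorem stmt6 {n : ℕ}
    (fs : ℤ → EuclideanSpace ℝ (Fin n) → EuclideanSpace ℝ (Fin n))
    (hfs : ∀ t, ContDiff ℝ 1 (fs t))
    (H : Matrix (Fin n) (Fin n) ℝ) (hH : H.PosDef) (hHsymm : H.IsSymm)
    (γ : ℝ) (hγ : γ ∈ Set.Ioo (0 : ℝ) 1)
    (J : ℤ → EuclideanSpace ℝ (Fin n) → Matrix (Fin n) (Fin n) ℝ)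
    (hJ : ∀ (t : ℤ) (y : EuclideanSpace ℝ (Fin n)),
      HasFDerivAt (fs t) (Matrix.toEuclideanCLM (𝕜 := ℝ) (J t y)) y)
    (hcontr : ∀ (t : ℤ) (y : EuclideanSpace ℝ (Fin n)),
      (γ • (H * H) - (J t y)ᵀ * (H * H) * (J t y)).PosSemidef)
    (t0 : ℤ) (s : ℤ → EuclideanSpace ℝ (Fin n))
    (hs : ∀ t : ℤ, t0 ≤ t → s (t + 1) = fs t (s t))
    (B : ℝ)
    (hB : ∀ τ : ℤ, t0 ≤ τ → ‖Matrix.toEuclideanCLM (𝕜 := ℝ) H (fs τ 0)‖ ≤ B) :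
    ∀ t : ℤ, t0 ≤ t →
      ‖Matrix.toEuclideanCLM (𝕜 := ℝ) H (s t)‖
        ≤ Real.sqrt γ ^ (t - t0).toNat * ‖Matrix.toEuclideanCLM (𝕜 := ℝ) H (s t0)‖
          + B / (1 - Real.sqrt γ) := by
  have hsqrt : √γ ∈ Set.Ico (0 : ℝ) 1 :=
    ⟨Real.sqrt_nonneg γ, by simpa using Real.sqrt_lt_sqrt hγ.1.le hγ.2⟩
  refine fun t ht ↦ stmt6_general _ hsqrt (fun τ _ ↦ hJ τ) (fun τ _ y v ↦ ?_) hs hB ht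
  exact norm_toLp_mulVec_mulVec_le_sqrt_mul hγ.1.le (by simpa [hHsymm.eq] using hcontr τ y) v.ofLp
end

section
/- Let f_i : ℤ × ℝⁿ → ℝⁿ (i = 1,…,N) be continuously differentiable maps with ‖f_i(t,x)‖ ≤ M(‖x‖) for all i, t, x, where M : ℝ → ℝ is nondecreasing and continuous. Let p, q ∈ ℝ^N be positive vectors and define f_s(t,s) := Σ_{i=1}^N q_i f_i(t, p_i s). Suppose there exist a symmetric positive definite H ∈ ℝ^{n×n} and γ ∈ (0,1) with (∂f_s/∂s)(t,s)ᵀ H² (∂f_s/∂s)(t,s) ⪯ γ H² for all s, t. Then every solution of s[t+1] = f_s(t, s[t]) satisfies limsup_{t→∞} ‖s[t]‖ ≤ √N ‖q‖ ‖H⁻¹‖ ‖H‖ M(0) / (1 − √γ). -/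
open scoped Matrix

/-!
Measured by `w ↦ ‖H w‖`, the matrix inequality bounds the derivative of the blended map by `√γ`, so
by the mean value inequality the map is a `√γ`-contraction for that seminorm. Comparing its value at
`s[t]` with its value at `0`, whose norm is at most `√N ‖q‖ M(0)` by Cauchy–Schwarz, gives
`‖H s[t+1]‖ ≤ √γ ‖H s[t]‖ + ‖H‖ √N ‖q‖ M(0)`. Hence `‖H s[t]‖` exceeds the fixed point
`‖H‖ √N ‖q‖ M(0) / (1 - √γ)` of this recursion by at most a geometrically decaying term, and
`‖s[t]‖ ≤ ‖H⁻¹‖ ‖H s[t]‖`.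
-/

section Matrix

open scoped ComplexOrder

variable {𝕜 m : Type*} [RCLike 𝕜] [Fintype m] [DecidableEq m]

lemma norm_toEuclideanCLM_apply_sq (A : Matrix m m 𝕜) (w : EuclideanSpace 𝕜 m) :
    ‖Matrix.toEuclideanCLM (𝕜 := 𝕜) A w‖ ^ 2 =
      RCLike.re (inner 𝕜 w (Matrix.toEuclideanCLM (𝕜 := 𝕜) (Aᴴ * A) w)) := by
  rw [ContinuousLinearMap.apply_norm_sq_eq_inner_adjoint_right, map_mul,
    ← Matrix.star_eq_conjTranspose, map_star]
  rfl

lemma norm_toEuclideanCLM_apply_le_of_posSemidef_sub {A B : Matrix m m 𝕜}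
    (h : (Bᴴ * B - Aᴴ * A).PosSemidef) (w : EuclideanSpace 𝕜 m) :
    ‖Matrix.toEuclideanCLM (𝕜 := 𝕜) A w‖ ≤ ‖Matrix.toEuclideanCLM (𝕜 := 𝕜) B w‖ := by
  have hpos : 0 ≤ RCLike.re (inner 𝕜 w (Matrix.toEuclideanCLM (𝕜 := 𝕜) (Bᴴ * B - Aᴴ * A) w)) :=
    (Matrix.isPositive_toEuclideanLin_iff.2 h).re_inner_nonneg_right w
  rw [map_sub, sub_apply, inner_sub_right, map_sub, sub_nonneg] at hpos
  rw [← sq_le_sq₀ (norm_nonneg _) (norm_nonneg _)]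
  simpa only [norm_toEuclideanCLM_apply_sq] using hpos

lemma norm_toEuclideanCLM_apply_apply_le_sqrt_mul {H J : Matrix m m 𝕜} {γ : ℝ} (hγ : 0 ≤ γ)
    (h : (γ • (Hᴴ * H) - Jᴴ * (Hᴴ * H) * J).PosSemidef) (w : EuclideanSpace 𝕜 m) :
    ‖Matrix.toEuclideanCLM (𝕜 := 𝕜) H (Matrix.toEuclideanCLM (𝕜 := 𝕜) J w)‖ ≤
      √γ * ‖Matrix.toEuclideanCLM (𝕜 := 𝕜) H w‖ := by
  have hsub : ((√γ : 𝕜) • H)ᴴ * ((√γ : 𝕜) • H) - (H * J)ᴴ * (H * J) =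
      γ • (Hᴴ * H) - Jᴴ * (Hᴴ * H) * J := by
    simp [Matrix.conjTranspose_smul, smul_smul, Real.mul_self_sqrt hγ, Matrix.mul_assoc]
  have hle := norm_toEuclideanCLM_apply_le_of_posSemidef_sub (hsub ▸ h) w
  rwa [map_mul, map_smul, smul_apply, norm_smul, RCLike.norm_ofReal,
    abs_of_nonneg (Real.sqrt_nonneg γ)] at hle

lemma leftInverse_toEuclideanCLM_inv {A : Matrix m m 𝕜} (hA : IsUnit A) :
    Function.LeftInverse (Matrix.toEuclideanCLM (𝕜 := 𝕜) A⁻¹)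
      (Matrix.toEuclideanCLM (𝕜 := 𝕜) A) := fun w => by
  rw [← mul_apply_eq_comp, ← map_mul,
    Matrix.nonsing_inv_mul A ((Matrix.isUnit_iff_isUnit_det A).1 hA), map_one,
    one_apply_eq_self]

end Matrix

lemma le_pow_mul_add_of_le_mul_add {a : ℕ → ℝ} {r C : ℝ} (hr : 0 ≤ r) (hr1 : r ≠ 1)
    (h : ∀ t, a (t + 1) ≤ r * a t + C) (t : ℕ) :
    a t ≤ r ^ t * (a 0 - C / (1 - r)) + C / (1 - r) := by
  have hfix : r * (C / (1 - r)) + C = C / (1 - r) := by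
    field_simp [sub_ne_zero.2 hr1.symm]
    ring
  have hgeom := le_geom (u := fun k => a k - C / (1 - r)) hr t fun k _ => by
    linarith [h k]
  linarith

lemma limsup_le_div_one_sub_of_le_mul_add {u a : ℕ → ℝ} {r C : ℝ} (hr : 0 ≤ r) (hr1 : r < 1)
    (hu : Filter.IsCoboundedUnder (· ≤ ·) Filter.atTop u) (hua : ∀ t, u t ≤ a t)
    (h : ∀ t, a (t + 1) ≤ r * a t + C) :
    Filter.limsup u Filter.atTop ≤ C / (1 - r) := by
  have hlim : Filter.Tendsto (fun t : ℕ => r ^ t * (a 0 - C / (1 - r)) + C / (1 - r))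
      Filter.atTop (nhds (C / (1 - r))) := by
    simpa using ((tendsto_pow_atTop_nhds_zero_of_lt_one hr hr1).mul_const _).add_const (C / (1 - r))
  rw [← hlim.limsup_eq]
  exact Filter.limsup_le_limsup
    (.of_forall fun t => (hua t).trans (le_pow_mul_add_of_le_mul_add hr hr1.ne h t))
    hu hlim.isBoundedUnder_le

lemma sum_abs_le_sqrt_card_mul_sqrt_sum_sq {ι : Type*} [Fintype ι] (q : ι → ℝ) :
    ∑ i, |q i| ≤ √(Fintype.card ι) * √(∑ i, q i ^ 2) := by
  simpa using Real.sum_mul_le_sqrt_mul_sqrt Finset.univ (fun _ => 1) fun i => |q i|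

section NormedSpace

variable {ι E G : Type*} [NormedAddCommGroup E] [NormedSpace ℝ E]
  [NormedAddCommGroup G] [NormedSpace ℝ G]

lemma norm_sum_smul_le_sqrt_card_mul [Fintype ι] (q : ι → ℝ) {x : ι → E} {m : ℝ}
    (hx : ∀ i, ‖x i‖ ≤ m) :
    ‖∑ i, q i • x i‖ ≤ √(Fintype.card ι) * √(∑ i, q i ^ 2) * m := by
  rcases isEmpty_or_nonempty ι with _ | ⟨⟨i₀⟩⟩
  · simp
  have hm : 0 ≤ m := (norm_nonneg _).trans (hx i₀)
  calc ‖∑ i, q i • x i‖ ≤ ∑ i, |q i| * m := norm_sum_le_of_le _ fun i _ => by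
        rw [norm_smul, Real.norm_eq_abs]
        gcongr
        exact hx i
    _ = (∑ i, |q i|) * m := (Finset.sum_mul ..).symm
    _ ≤ _ := by gcongr; exact sum_abs_le_sqrt_card_mul_sqrt_sum_sq q

lemma norm_sub_le_of_norm_fderiv_apply_le {F : E → G} {F' : E → E →L[ℝ] G}
    (hF : ∀ y, HasFDerivAt F (F' y) y) {x y : E} {C : ℝ} (hC : ∀ z, ‖F' z (x - y)‖ ≤ C) :
    ‖F x - F y‖ ≤ C := by
  have hderiv (τ : ℝ) : HasDerivAt (F ∘ AffineMap.lineMap y x)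
      (F' (AffineMap.lineMap y x τ) (x - y)) τ :=
    (hF _).comp_hasDerivAt τ AffineMap.hasDerivAt_lineMap
  simpa using norm_image_sub_le_of_norm_deriv_le_segment_01'
    (fun τ _ => (hderiv τ).hasDerivWithinAt) fun τ _ => hC _

lemma norm_map_le_of_norm_map_fderiv_le {F : E → E} {F' : E → E →L[ℝ] E}
    (hF : ∀ y, HasFDerivAt F (F' y) y) (H : E →L[ℝ] G) {r : ℝ}
    (hr : ∀ y w, ‖H (F' y w)‖ ≤ r * ‖H w‖) (x : E) :
    ‖H (F x)‖ ≤ r * ‖H x‖ + ‖H‖ * ‖F 0‖ := by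
  have hcontr : ‖H (F x) - H (F 0)‖ ≤ r * ‖H x‖ :=
    norm_sub_le_of_norm_fderiv_apply_le (fun y => H.hasFDerivAt.comp y (hF y))
      fun z => by simpa using hr z x
  calc ‖H (F x)‖ ≤ ‖H (F x) - H (F 0)‖ + ‖H (F 0)‖ := norm_le_norm_sub_add _ _
    _ ≤ r * ‖H x‖ + ‖H‖ * ‖F 0‖ := add_le_add hcontr (H.le_opNorm _)

theorem limsup_norm_le_of_norm_map_fderiv_le {F : ℕ → E → E} {F' : ℕ → E → E →L[ℝ] E}
    (hF : ∀ t y, HasFDerivAt (F t) (F' t y) y) {C : ℝ} (hC : ∀ t, ‖F t 0‖ ≤ C)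
    {H : E →L[ℝ] G} {K : G →L[ℝ] E} (hK : Function.LeftInverse K H) {r : ℝ} (hr : 0 ≤ r)
    (hr1 : r < 1) (hcontr : ∀ t y w, ‖H (F' t y w)‖ ≤ r * ‖H w‖) {s : ℕ → E}
    (hs : ∀ t, s (t + 1) = F t (s t)) :
    Filter.limsup (fun t => ‖s t‖) Filter.atTop ≤ ‖K‖ * (‖H‖ * C) / (1 - r) := by
  have hstep (t : ℕ) : ‖H (s (t + 1))‖ ≤ r * ‖H (s t)‖ + ‖H‖ * C := by
    rw [hs]
    exact (norm_map_le_of_norm_map_fderiv_le (hF t) H (hcontr t) (s t)).trans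
      (by gcongr; exact hC t)
  refine limsup_le_div_one_sub_of_le_mul_add (a := fun t => ‖K‖ * ‖H (s t)‖) hr hr1
    (Filter.isCoboundedUnder_le_of_le _ fun t => norm_nonneg (s t))
    (fun t => by simpa only [hK (s t)] using K.le_opNorm (H (s t))) fun t => ?_
  calc ‖K‖ * ‖H (s (t + 1))‖ ≤ ‖K‖ * (r * ‖H (s t)‖ + ‖H‖ * C) := by gcongr; exact hstep t
    _ = r * (‖K‖ * ‖H (s t)‖) + ‖K‖ * (‖H‖ * C) := by ring

theorem stmt7_general [Fintype ι] {f : ι → ℕ → E → E} {m : ℝ} (hf : ∀ i t, ‖f i t 0‖ ≤ m)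
    {p q : ι → ℝ} {F' : ℕ → E → E →L[ℝ] E}
    (hF' : ∀ t y, HasFDerivAt (fun z => ∑ i, q i • f i t (p i • z)) (F' t y) y)
    {H : E →L[ℝ] G} {K : G →L[ℝ] E} (hK : Function.LeftInverse K H) {r : ℝ} (hr : 0 ≤ r)
    (hr1 : r < 1) (hcontr : ∀ t y w, ‖H (F' t y w)‖ ≤ r * ‖H w‖) {s : ℕ → E}
    (hs : ∀ t, s (t + 1) = ∑ i, q i • f i t (p i • s t)) :
    Filter.limsup (fun t => ‖s t‖) Filter.atTop ≤
      √(Fintype.card ι) * √(∑ i, q i ^ 2) * ‖K‖ * ‖H‖ * m / (1 - r) := by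
  have hzero (t : ℕ) : ‖∑ i, q i • f i t (p i • (0 : E))‖ ≤
      √(Fintype.card ι) * √(∑ i, q i ^ 2) * m :=
    norm_sum_smul_le_sqrt_card_mul q fun i => by simpa only [smul_zero] using hf i t
  convert limsup_norm_le_of_norm_map_fderiv_le hF' hzero hK hr hr1 hcontr hs using 2
  ring

end NormedSpace

/-- **Lemma 5, second part (ultimate bound for the blended dynamics).**
Under uniform boundedness `‖fᵢ(t,x)‖ ≤ M(‖x‖)` and contractivity of the blended
dynamics `fₛ(t,s) = Σᵢ qᵢ fᵢ(t, pᵢ s)`, every solution of `s[t+1] = fₛ(t, s[t])`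
satisfies `limsup_{t→∞} ‖s[t]‖ ≤ √N ‖q‖ ‖H⁻¹‖ ‖H‖ M(0) / (1 − √γ)`. -/
theorem stmt7 {N n : ℕ} (hN : 1 ≤ N)
    (f : Fin N → ℤ → EuclideanSpace ℝ (Fin n) → EuclideanSpace ℝ (Fin n))
    (hf : ∀ i t, ContDiff ℝ 1 (f i t))
    (M : ℝ → ℝ) (hM : Monotone M) (hMcont : Continuous M)
    (hfb : ∀ (i : Fin N) (t : ℤ) (x : EuclideanSpace ℝ (Fin n)), ‖f i t x‖ ≤ M ‖x‖)
    (p q : Fin N → ℝ) (hp : ∀ i, 0 < p i) (hq : ∀ i, 0 < q i)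
    (H : Matrix (Fin n) (Fin n) ℝ) (hH : H.PosDef) (hHsymm : H.IsSymm)
    (γ : ℝ) (hγ : γ ∈ Set.Ioo (0 : ℝ) 1)
    (J : ℤ → EuclideanSpace ℝ (Fin n) → Matrix (Fin n) (Fin n) ℝ)
    (hJ : ∀ (t : ℤ) (y : EuclideanSpace ℝ (Fin n)),
      HasFDerivAt (fun z => ∑ i, q i • f i t (p i • z))
        (Matrix.toEuclideanCLM (𝕜 := ℝ) (J t y)) y)
    (hcontr : ∀ (t : ℤ) (y : EuclideanSpace ℝ (Fin n)),
      (γ • (H * H) - (J t y)ᵀ * (H * H) * (J t y)).PosSemidef)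
    (s : ℤ → EuclideanSpace ℝ (Fin n))
    (hs : ∀ t : ℤ, s (t + 1) = ∑ i, q i • f i t (p i • s t)) :
    Filter.limsup (fun t : ℤ => ‖s t‖) Filter.atTop
      ≤ Real.sqrt N * Real.sqrt (∑ i, q i ^ 2)
          * ‖Matrix.toEuclideanCLM (𝕜 := ℝ) (H⁻¹)‖
          * ‖Matrix.toEuclideanCLM (𝕜 := ℝ) H‖ * M 0 / (1 - Real.sqrt γ) := by
  have hγ1 : √γ < 1 := by simpa using Real.sqrt_lt_sqrt hγ.1.le hγ.2
  have hle (t y w) := norm_toEuclideanCLM_apply_apply_le_sqrt_mul (H := H) (J := J t y) hγ.1.le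
    (by simpa [hHsymm.eq] using hcontr t y) w
  rw [← Nat.map_cast_int_atTop, ← Filter.limsup_comp]
  simpa only [Function.comp_def, Fintype.card_fin] using
    stmt7_general (fun i t => by simpa using hfb i t 0)
      (fun t => hJ t) (leftInverse_toEuclideanCLM_inv hH.isUnit) γ.sqrt_nonneg hγ1
      (fun t => hle t) fun t => hs t
end

section
/- Let g : ℝⁿ → ℝⁿ be continuously differentiable and let H ∈ ℝ^{n×n} be symmetric. Then for any s₁, s₂ ∈ ℝⁿ there exists a point s̃ on the line segment connecting s₁ and s₂ such that (g(s₂) − g(s₁))ᵀ H² (g(s₂) − g(s₁)) ≤ (s₂ − s₁)ᵀ Dg(s̃)ᵀ H² Dg(s̃) (s₂ − s₁), where Dg(s̃) is the Jacobian matrix of g at s̃. -/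
open scoped Matrix RealInnerProductSpace

/-!
Since `H² = HᵀH`, the two quadratic forms are `‖H (g s₂ - g s₁)‖²` and `‖H Dg(s̃) (s₂ - s₁)‖²`, so
the theorem is an instance, for `f = H ∘ g`, of the mean value inequality
`‖f y - f x‖ ≤ ‖Df(z) (y - x)‖` with a single `z` on the segment from `x` to `y`. This `z` comes
from Lagrange's theorem for `φ ∘ f`, where `φ` is a norming functional of `f y - f x`.
-/

theorem exists_mem_segment_norm_image_sub_le {E F : Type*} [NormedAddCommGroup E]
    [NormedSpace ℝ E] [NormedAddCommGroup F] [NormedSpace ℝ F] {f : E → F} {f' : E → E →L[ℝ] F}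
    {x y : E} (hf : ∀ z ∈ segment ℝ x y, HasFDerivWithinAt f (f' z) (segment ℝ x y) z) :
    ∃ z ∈ segment ℝ x y, ‖f y - f x‖ ≤ ‖f' z (y - x)‖ := by
  obtain ⟨φ, hφ_norm, hφ⟩ := exists_dual_vector'' ℝ (f y - f x)
  obtain ⟨z, hz, hmvt⟩ := domain_mvt (f' := fun z => φ ∘L f' z)
    (fun z hz => φ.hasFDerivAt.comp_hasFDerivWithinAt z (hf z hz))
    (convex_segment x y) (left_mem_segment ℝ x y) (right_mem_segment ℝ x y)
  refine ⟨z, hz, ?_⟩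
  calc
    ‖f y - f x‖ = φ (f y - f x) := hφ.symm
    _ = φ (f' z (y - x)) := (map_sub φ _ _).trans hmvt
    _ ≤ ‖φ (f' z (y - x))‖ := Real.le_norm_self _
    _ ≤ ‖f' z (y - x)‖ := (φ.le_of_opNorm_le hφ_norm _).trans_eq (one_mul _)

section Matrix

variable {l m n : Type*} [Fintype l] [Fintype m] [Fintype n] [DecidableEq n]

lemma inner_toEuclideanLin_transpose_mul_self (A : Matrix m n ℝ) (x : EuclideanSpace ℝ n) :
    ⟪x, Matrix.toEuclideanLin (Aᵀ * A) x⟫ = ‖Matrix.toEuclideanLin A x‖ ^ 2 := by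
  classical
  rw [← Matrix.conjTranspose_eq_transpose_of_trivial, Matrix.toLpLin_mul_same,
    Matrix.toEuclideanLin_conjTranspose_eq_adjoint, LinearMap.comp_apply,
    LinearMap.adjoint_inner_right, real_inner_self_eq_norm_sq]

theorem stmt9_general [DecidableEq m] {g : EuclideanSpace ℝ n → EuclideanSpace ℝ m}
    {J : EuclideanSpace ℝ n → Matrix m n ℝ} {s₁ s₂ : EuclideanSpace ℝ n}
    (hJ : ∀ z ∈ segment ℝ s₁ s₂, HasFDerivWithinAt g
      (Matrix.toEuclideanLin (J z)).toContinuousLinearMap (segment ℝ s₁ s₂) z)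
    (H : Matrix l m ℝ) :
    ∃ z ∈ segment ℝ s₁ s₂,
      ⟪g s₂ - g s₁, Matrix.toEuclideanLin (Hᵀ * H) (g s₂ - g s₁)⟫
        ≤ ⟪s₂ - s₁, Matrix.toEuclideanLin ((J z)ᵀ * (Hᵀ * H) * J z) (s₂ - s₁)⟫ := by
  let A := (Matrix.toEuclideanLin H).toContinuousLinearMap
  obtain ⟨z, hz, hle⟩ := exists_mem_segment_norm_image_sub_le
    fun z hz => A.hasFDerivAt.comp_hasFDerivWithinAt z (hJ z hz)
  have hgram : (J z)ᵀ * (Hᵀ * H) * J z = (H * J z)ᵀ * (H * J z) := by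
    simp only [Matrix.transpose_mul, Matrix.mul_assoc]
  refine ⟨z, hz, ?_⟩
  rw [hgram, inner_toEuclideanLin_transpose_mul_self, inner_toEuclideanLin_transpose_mul_self,
    Matrix.toLpLin_mul_same, map_sub]
  exact pow_le_pow_left₀ (norm_nonneg _) hle 2

end Matrix

/-- **Quadratic mean-value inequality (claim (A.1) in the proof of Lemma 4).**
For continuously differentiable `g` with Jacobian matrix `J` and symmetric `H`,
given `s₁, s₂` there is a point `s̃` on the segment joining them such that
`(g(s₂) − g(s₁))ᵀ H² (g(s₂) − g(s₁)) ≤ (s₂ − s₁)ᵀ J(s̃)ᵀ H² J(s̃) (s₂ − s₁)`. -/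
theorem stmt9 {n : ℕ}
    (g : EuclideanSpace ℝ (Fin n) → EuclideanSpace ℝ (Fin n))
    (hg : ContDiff ℝ 1 g)
    (J : EuclideanSpace ℝ (Fin n) → Matrix (Fin n) (Fin n) ℝ)
    (hJ : ∀ y, HasFDerivAt g (Matrix.toEuclideanCLM (𝕜 := ℝ) (J y)) y)
    (H : Matrix (Fin n) (Fin n) ℝ) (hHsymm : H.IsSymm)
    (s₁ s₂ : EuclideanSpace ℝ (Fin n)) :
    ∃ c ∈ Set.Icc (0 : ℝ) 1,
      ⟪g s₂ - g s₁, Matrix.toEuclideanLin (H * H) (g s₂ - g s₁)⟫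
        ≤ ⟪s₂ - s₁,
            Matrix.toEuclideanLin
              ((J (c • s₂ + (1 - c) • s₁))ᵀ * (H * H) * (J (c • s₂ + (1 - c) • s₁)))
              (s₂ - s₁)⟫ := by
  simpa only [segment_eq_image, Set.exists_mem_image, add_comm, hHsymm.eq] using
    stmt9_general (s₁ := s₁) (s₂ := s₂) (fun z _ => (hJ z).hasFDerivWithinAt) H
end
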